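/- arXiv:2308.16146 — 4 statements merged into one kernel-verified Lean document; each statement's English description precedes it below -/
import Mathlib

section
/- For every orthogonal matrix Q ∈ O(2), the largest absolute value of an entry in the first column of Q equals the largest absolute value over all entries of Q, and ρ^{GEPP}(Q) = ρ^{GECP}(Q) = 1/‖Q‖_max², where ‖Q‖_max = max_{i,j} |Q_{ij}|. -/
open Matrix Filter

/-- Gaussian-elimination intermediate entry `A^{(k+1)}_{ij}` (0-indexed step `k`):
the Schur complement of the leading `k × k` block. -/
noncomputable def geEntry {n : ℕ} (A : Matrix (Fin n) (Fin n) ℝ) (k i j : Fin n) : ℝ :=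
  A i j - ∑ a : Fin k.val, ∑ b : Fin k.val,
    A i (Fin.castLE k.isLt.le a) *
      (A.submatrix (Fin.castLE k.isLt.le) (Fin.castLE k.isLt.le))⁻¹ a b *
      A (Fin.castLE k.isLt.le b) j

/-- `A` is PP: at each GE step the pivot dominates its column. -/
def IsPP {n : ℕ} (A : Matrix (Fin n) (Fin n) ℝ) : Prop :=
  ∀ k i : Fin n, k ≤ i → |geEntry A k i k| ≤ |geEntry A k k k|

/-- `A` is CP: at each GE step the pivot dominates the whole untriangularized block. -/
def IsCP {n : ℕ} (A : Matrix (Fin n) (Fin n) ℝ) : Prop :=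
  ∀ k i j : Fin n, k ≤ i → k ≤ j → |geEntry A k i j| ≤ |geEntry A k k k|

/-- Maximal absolute Gaussian-elimination intermediate entry of `A`. -/
noncomputable def maxGE {n : ℕ} (A : Matrix (Fin n) (Fin n) ℝ) : ℝ :=
  ⨆ k : Fin n, ⨆ i : {i : Fin n // k ≤ i}, ⨆ j : {j : Fin n // k ≤ j},
    |geEntry A k i.1 j.1|

/-- `max_{i,j} |A_{ij}|`. -/
noncomputable def maxAbs {n : ℕ} (A : Matrix (Fin n) (Fin n) ℝ) : ℝ :=
  ⨆ i, ⨆ j, |A i j|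

/-- Growth factor `ρ(A)`. -/
noncomputable def growth {n : ℕ} (A : Matrix (Fin n) (Fin n) ℝ) : ℝ :=
  maxGE A / maxAbs A

/-- `P` is a permutation matrix. -/
def IsPermMatrix {n : ℕ} (P : Matrix (Fin n) (Fin n) ℝ) : Prop :=
  ∃ σ : Equiv.Perm (Fin n), P = σ.permMatrix ℝ

/-- `D` is a diagonal matrix with diagonal entries `±1`. -/
def IsSignDiag {n : ℕ} (D : Matrix (Fin n) (Fin n) ℝ) : Prop :=
  (∀ i j, i ≠ j → D i j = 0) ∧ (∀ i, D i i = 1 ∨ D i i = -1)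

/-- Wilkinson's unipotent lower triangular matrix `L_n`. -/
def Lmat (n : ℕ) : Matrix (Fin n) (Fin n) ℝ :=
  fun i j => if i = j then 1 else if j < i then -1 else 0

/-- Wilkinson's upper triangular factor `U_n`. -/
def Umat (n : ℕ) : Matrix (Fin n) (Fin n) ℝ :=
  fun i j => if (j : ℕ) = n - 1 then 2 ^ (i : ℕ) else if i = j then 1 else 0

/-- Wilkinson's worst-case GEPP growth matrix `A_n`. -/
def Amat (n : ℕ) : Matrix (Fin n) (Fin n) ℝ :=
  fun i j =>
    if (j : ℕ) = n - 1 ∧ (i : ℕ) < n - 1 then 1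
    else if i = j then 1
    else if j < i then -1
    else 0

/-- `α_j = 1 + (2/3)(4^{j-1} - 1)` (1-indexed `j`). -/
noncomputable def alpha (j : ℕ) : ℝ := 1 + 2 / 3 * (4 ^ (j - 1) - 1)

/-- The unnormalized orthogonal factor `Q̂` (columns of `Qhat n` are, 1-indexed,
the columns described in the paper; here 0-indexed). -/
noncomputable def Qhat (n : ℕ) : Matrix (Fin n) (Fin n) ℝ :=
  fun i j =>
    if (j : ℕ) = n - 1 then
      if (i : ℕ) = n - 1 then 1 else 2 ^ (n - 2 - (i : ℕ))
    else if (j : ℕ) = n - 2 then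
      if (i : ℕ) = n - 2 then 1 else if (i : ℕ) = n - 1 then -1 else 0
    else if (i : ℕ) < (j : ℕ) then
      -((n : ℝ) - (j : ℕ) - 2) * 2 ^ ((j : ℕ) - (i : ℕ) - 1)
    else if (i : ℕ) = (j : ℕ) then
      ((n : ℝ) - (j : ℕ) - 1) * (alpha ((j : ℕ) + 1) - 1) + 1
    else -alpha ((j : ℕ) + 1)

/-- The diagonal normalization matrix `D̂`. -/
noncomputable def Dhat (n : ℕ) : Matrix (Fin n) (Fin n) ℝ :=
  Matrix.diagonal fun j =>
    if (j : ℕ) = 0 then (n : ℝ)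
    else if (j : ℕ) = n - 2 then 2
    else if (j : ℕ) = n - 1 then 2 * alpha (n - 1)
    else ((n : ℝ) - (j : ℕ) - 1) ^ 2 * (alpha ((j : ℕ) + 1) - 1) ^ 2 *
        (2 * alpha ((j : ℕ) + 1) - 1) / (2 * alpha ((j : ℕ) + 1) - 2) +
      ((n : ℝ) - (j : ℕ) - 1) * (alpha ((j : ℕ) + 1) ^ 2 + alpha ((j : ℕ) + 1) - 1) +
      2 * alpha (j : ℕ)

/-- `Q_n = Q̂ D̂^{-1/2}`, the orthogonal QR factor of `L_n`. -/
noncomputable def Qmat (n : ℕ) : Matrix (Fin n) (Fin n) ℝ :=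
  Qhat n * Matrix.diagonal fun m => (Real.sqrt (Dhat n m m))⁻¹

/-- Frobenius norm. -/
noncomputable def frobNorm {n : ℕ} (M : Matrix (Fin n) (Fin n) ℝ) : ℝ :=
  Real.sqrt (∑ i, ∑ j, M i j ^ 2)

/-- The Givens rotation `G(θ, i, j)`. -/
noncomputable def givens (n : ℕ) (θ : ℝ) (i j : Fin n) : Matrix (Fin n) (Fin n) ℝ :=
  fun a b =>
    if a = i ∧ b = i then Real.cos θ
    else if a = j ∧ b = j then Real.cos θ
    else if a = i ∧ b = j then -Real.sin θ
    else if a = j ∧ b = i then Real.sin θ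
    else if a = b then 1 else 0

/-- The ordered product of Givens rotations `Q(θ) = ∏_{i=1}^{n-1} ∏_{j=i+1}^n G(θ_{ij}, i, j)`. -/
noncomputable def QofTheta (n : ℕ) (θ : Fin n → Fin n → ℝ) : Matrix (Fin n) (Fin n) ℝ :=
  ((List.finRange n).map fun i =>
    (((List.finRange n).filter fun j => decide (i < j)).map fun j =>
      givens n (θ i j) i j).prod).prod

theorem aux_sq {A : Matrix (Fin 2) (Fin 2) ℝ} (h : Aᵀ * A = 1) :
    |A 1 1| = |A 0 0| ∧ |A 0 1| = |A 1 0| ∧ A 0 0 ^ 2 + A 1 0 ^ 2 = 1 ∧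
      (A 0 0 * A 1 1 - A 0 1 * A 1 0) ^ 2 = 1 := by
  have e1 := congrFun (congrFun h 0) 0
  have e2 := congrFun (congrFun h 1) 1
  have e3 := congrFun (congrFun h 0) 1
  have h' : A * Aᵀ = 1 := mul_eq_one_comm.mp h
  have e4 := congrFun (congrFun h' 0) 0
  simp [Matrix.mul_apply, Fin.sum_univ_two] at e1 e2 e3 e4
  refine ⟨?_, ?_, by linarith, ?_⟩
  · rw [← sq_eq_sq_iff_abs_eq_abs]; linarith
  · rw [← sq_eq_sq_iff_abs_eq_abs]; linarith
  · have : (A 0 0 * A 1 1 - A 0 1 * A 1 0) ^ 2 =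
      (A 0 0 * A 0 0 + A 1 0 * A 1 0) * (A 0 1 * A 0 1 + A 1 1 * A 1 1)
        - (A 0 0 * A 0 1 + A 1 0 * A 1 1) ^ 2 := by ring
    rw [this, e1, e2, e3]; norm_num

theorem aux_maxAbs {A : Matrix (Fin 2) (Fin 2) ℝ} (h : Aᵀ * A = 1) :
    maxAbs A = ⨆ i : Fin 2, |A i 0| := by
  obtain ⟨h1, h2, -, -⟩ := aux_sq h
  have b (f : Fin 2 → ℝ) : BddAbove (Set.range f) := (Set.finite_range f).bddAbove
  unfold maxAbs
  apply le_antisymm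
  · refine ciSup_le fun i => ciSup_le fun j => ?_
    fin_cases i <;> fin_cases j
    · exact le_ciSup (f := fun i : Fin 2 => |A i 0|) (b _) 0
    · exact h2.le.trans (le_ciSup (f := fun i : Fin 2 => |A i 0|) (b _) 1)
    · exact le_ciSup (f := fun i : Fin 2 => |A i 0|) (b _) 1
    · exact h1.le.trans (le_ciSup (f := fun i : Fin 2 => |A i 0|) (b _) 0)
  · exact ciSup_mono (b _) fun i => le_ciSup (f := fun j : Fin 2 => |A i j|) (b _) 0

theorem ge_zero (A : Matrix (Fin 2) (Fin 2) ℝ) (i j : Fin 2) : geEntry A 0 i j = A i j := by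
  have : IsEmpty (Fin ((0 : Fin 2) : ℕ)) := Fin.isEmpty
  simp [geEntry]

theorem ge_one (A : Matrix (Fin 2) (Fin 2) ℝ) :
    geEntry A 1 1 1 = A 1 1 - A 1 0 * (A 0 0)⁻¹ * A 0 1 := by
  have key : ∀ M : Matrix (Fin 1) (Fin 1) ℝ, M⁻¹ 0 0 = (M 0 0)⁻¹ := by
    intro M
    simp [Matrix.inv_def, Matrix.adjugate_fin_one]
  unfold geEntry
  change A 1 1 - ∑ a : Fin 1, ∑ b : Fin 1, _ = _
  rw [Fin.sum_univ_one, Fin.sum_univ_one]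
  have := key (A.submatrix (Fin.castLE (by norm_num)) (Fin.castLE (by norm_num)))
  erw [this]
  rfl

theorem aux_growth {A : Matrix (Fin 2) (Fin 2) ℝ} (h : Aᵀ * A = 1)
    (hp : |A 1 0| ≤ |A 0 0|) : growth A = 1 / maxAbs A ^ 2 := by
  obtain ⟨h1, h2, h3, h4⟩ := aux_sq h
  have b {ι : Type} [Finite ι] (f : ι → ℝ) : BddAbove (Set.range f) :=
    (Set.finite_range f).bddAbove
  have hm : maxAbs A = |A 0 0| := by
    rw [aux_maxAbs h]
    apply le_antisymm
    · refine ciSup_le fun i => ?_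
      fin_cases i
      · exact le_rfl
      · exact hp
    · exact le_ciSup (f := fun i : Fin 2 => |A i 0|) (b _) 0
  have ha : A 0 0 ≠ 0 := by
    intro h0
    rw [h0, abs_zero] at hp
    have := abs_nonpos_iff.mp hp
    rw [h0, this] at h3
    norm_num at h3
  have hapos : 0 < |A 0 0| := abs_pos.mpr ha
  have hale : |A 0 0| ≤ 1 := by
    rw [← sq_le_one_iff_abs_le_one]; nlinarith [sq_nonneg (A 1 0)]
  have hinv : |A 0 0| ≤ |A 0 0|⁻¹ := hale.trans ((one_le_inv₀ hapos).mpr hale)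
  have hge : |geEntry A 1 1 1| = |A 0 0|⁻¹ := by
    have : geEntry A 1 1 1 = (A 0 0 * A 1 1 - A 0 1 * A 1 0) * (A 0 0)⁻¹ := by
      rw [ge_one]; field_simp
    rw [this, abs_mul, abs_inv]
    have : |A 0 0 * A 1 1 - A 0 1 * A 1 0| = 1 := by
      rw [← abs_one, ← sq_eq_sq_iff_abs_eq_abs, h4]; norm_num
    rw [this, one_mul]
  have hM : maxGE A = |A 0 0|⁻¹ := by
    unfold maxGE
    apply le_antisymm
    · refine ciSup_le fun k => ?_
      haveI : Nonempty {i : Fin 2 // k ≤ i} := ⟨⟨k, le_rfl⟩⟩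
      refine ciSup_le fun i => ciSup_le fun j => ?_
      obtain ⟨i, hi⟩ := i
      obtain ⟨j, hj⟩ := j
      have hk : k = 0 ∨ k = 1 := by omega
      rcases hk with rfl | rfl
      · rw [ge_zero]
        refine le_trans ?_ hinv
        fin_cases i <;> fin_cases j
        · exact le_rfl
        · exact h2.le.trans hp
        · exact hp
        · exact h1.le
      · obtain rfl : i = 1 := by omega
        obtain rfl : j = 1 := by omega
        exact hge.le
    · rw [← hge]
      refine le_trans ?_ (le_ciSup (b _) (1 : Fin 2))
      refine le_trans ?_ (le_ciSup (b _) (⟨1, le_rfl⟩ : {i : Fin 2 // 1 ≤ i}))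
      exact le_ciSup (f := fun j : {j : Fin 2 // 1 ≤ j} => |geEntry A 1 1 j.1|) (b _) ⟨1, le_rfl⟩
  unfold growth
  rw [hM, hm]
  field_simp

theorem aux_sub (Q : Matrix (Fin 2) (Fin 2) ℝ) (σ τ : Equiv.Perm (Fin 2)) :
    maxAbs (Q.submatrix σ τ) = maxAbs Q := by
  unfold maxAbs
  rw [← Equiv.iSup_comp (g := fun i => ⨆ j, |Q i j|) σ]
  refine iSup_congr fun i => ?_
  exact Equiv.iSup_comp (g := fun j => |Q (σ i) j|) τ

theorem aux_orth {Q : Matrix (Fin 2) (Fin 2) ℝ} (hQ : Qᵀ * Q = 1) (σ τ : Equiv.Perm (Fin 2)) :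
    (Q.submatrix σ τ)ᵀ * Q.submatrix σ τ = 1 := by
  rw [Matrix.transpose_submatrix, Matrix.submatrix_mul_equiv, hQ, Matrix.submatrix_one_equiv]

/-- for `Q ∈ O(2)`, the largest absolute entry of the first column of `Q` equals
`‖Q‖_max`, and `ρ^GEPP(Q) = ρ^GECP(Q) = 1/‖Q‖_max²`. -/
theorem orth_two_gepp_eq_gecp (Q : Matrix (Fin 2) (Fin 2) ℝ) (hQ : Qᵀ * Q = 1) :
    (⨆ i : Fin 2, |Q i 0|) = maxAbs Q ∧
    (∀ P : Matrix (Fin 2) (Fin 2) ℝ, IsPermMatrix P → IsPP (P * Q) →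
      growth (P * Q) = 1 / maxAbs Q ^ 2) ∧
    (∀ P R : Matrix (Fin 2) (Fin 2) ℝ, IsPermMatrix P → IsPermMatrix R →
      IsCP (P * Q * R) → growth (P * Q * R) = 1 / maxAbs Q ^ 2) := by
  refine ⟨(aux_maxAbs hQ).symm, ?_, ?_⟩
  · rintro P ⟨σ, rfl⟩ hP
    have e : σ.permMatrix ℝ * Q = Q.submatrix σ (Equiv.refl _) := by
      rw [Equiv.Perm.permMatrix, PEquiv.toMatrix_toPEquiv_mul]; rfl
    have := hP 0 1 (by decide)
    rw [ge_zero, ge_zero] at this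
    rw [e] at this ⊢
    rw [aux_growth (aux_orth hQ _ _) this, aux_sub]
  · rintro P R ⟨σ, rfl⟩ ⟨τ, rfl⟩ hP
    have e : σ.permMatrix ℝ * Q * τ.permMatrix ℝ = Q.submatrix σ τ.symm := by
      rw [Equiv.Perm.permMatrix, Equiv.Perm.permMatrix, PEquiv.toMatrix_toPEquiv_mul,
        PEquiv.mul_toMatrix_toPEquiv]; rfl
    have := hP 0 1 0 (by decide) (by decide)
    rw [ge_zero, ge_zero] at this
    rw [e] at this ⊢
    rw [aux_growth (aux_orth hQ _ _) this, aux_sub]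
end

section
/- Let A ∈ GL_n(ℝ) be PP. Suppose A = QR where Q is orthogonal and R is upper triangular with positive diagonal, and A = LUD where L is unipotent lower triangular with max_{i,j} |L_{ij}| = 1, U is upper triangular with positive diagonal, and D is a diagonal matrix with diagonal entries ±1. Then: (i) U D R^{−1} is upper triangular and Q = L (U D R^{−1}), so L is the unipotent lower triangular Gaussian-elimination factor of Q and Q is PP; and (ii) R (D U D)^{−1} is upper triangular with positive diagonal and L D = Q (R (D U D)^{−1}), so Q is the orthogonal factor of the QR factorization of L D. -/
open Matrix Filter

lemma sum_castLE {n k : ℕ} (h : k ≤ n) (f : Fin n → ℝ) (hf : ∀ m : Fin n, k ≤ m.val → f m = 0) :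
    ∑ m, f m = ∑ a : Fin k, f (Fin.castLE h a) := by
  symm
  apply Finset.sum_of_injOn (Fin.castLE h)
  · intro a _ b _ hab
    exact Fin.castLE_injective h hab
  · intro a _
    simp
  · intro m _ hm
    apply hf
    by_contra hlt
    push Not at hlt
    exact hm ⟨⟨m.val, hlt⟩, by simp, rfl⟩
  · intro a _
    rfl

lemma upper_det_unit {n : ℕ} (V : Matrix (Fin n) (Fin n) ℝ)
    (hV : ∀ i j : Fin n, j < i → V i j = 0) (hd : ∀ i, V i i ≠ 0) : IsUnit V.det := by
  have hb : V.BlockTriangular id := fun i j hij => hV i j hij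
  rw [Matrix.det_of_upperTriangular hb, isUnit_iff_ne_zero]
  exact Finset.prod_ne_zero_iff.mpr fun i _ => hd i

lemma upper_mul {n : ℕ} (V W : Matrix (Fin n) (Fin n) ℝ)
    (hV : ∀ i j : Fin n, j < i → V i j = 0) (hW : ∀ i j : Fin n, j < i → W i j = 0) :
    ∀ i j : Fin n, j < i → (V * W) i j = 0 := by
  intro i j hij
  have hb : V.BlockTriangular id := fun i j hij => hV i j hij
  have hc : W.BlockTriangular id := fun i j hij => hW i j hij
  exact (hb.mul hc) hij

lemma upper_mul_diag {n : ℕ} (V W : Matrix (Fin n) (Fin n) ℝ)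
    (hV : ∀ i j : Fin n, j < i → V i j = 0) (hW : ∀ i j : Fin n, j < i → W i j = 0) (i : Fin n) :
    (V * W) i i = V i i * W i i := by
  rw [Matrix.mul_apply]
  apply Finset.sum_eq_single i
  · intro b _ hb
    rcases lt_or_gt_of_ne hb with h | h
    · rw [hV i b h, zero_mul]
    · rw [hW b i h, mul_zero]
  · simp

lemma upper_inv {n : ℕ} (V : Matrix (Fin n) (Fin n) ℝ)
    (hV : ∀ i j : Fin n, j < i → V i j = 0) (hd : ∀ i, V i i ≠ 0) :
    ∀ i j : Fin n, j < i → V⁻¹ i j = 0 := by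
  intro i j hij
  have hb : V.BlockTriangular id := fun i j hij => hV i j hij
  haveI := Matrix.invertibleOfIsUnitDet V (upper_det_unit V hV hd)
  exact (Matrix.blockTriangular_inv_of_blockTriangular hb) hij

lemma upper_inv_diag {n : ℕ} (V : Matrix (Fin n) (Fin n) ℝ)
    (hV : ∀ i j : Fin n, j < i → V i j = 0) (hd : ∀ i, V i i ≠ 0) (i : Fin n) :
    V⁻¹ i i = (V i i)⁻¹ := by
  have h := upper_mul_diag V V⁻¹ hV (upper_inv V hV hd) i
  rw [Matrix.mul_nonsing_inv V (upper_det_unit V hV hd), Matrix.one_apply_eq] at h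
  exact eq_inv_of_mul_eq_one_right h.symm

lemma geEntry_of_LU {n : ℕ} (A L V : Matrix (Fin n) (Fin n) ℝ) (hA : A = L * V)
    (hL : ∀ i j : Fin n, i < j → L i j = 0) (hLd : ∀ i, L i i = 1)
    (hV : ∀ i j : Fin n, j < i → V i j = 0) (hd : ∀ i, V i i ≠ 0) (k i : Fin n) :
    geEntry A k i k = L i k * V k k := by
  have hk : k.val ≤ n := k.isLt.le
  set c : Fin k.val → Fin n := Fin.castLE hk with hc
  have hclt : ∀ a, c a < k := fun a => a.isLt
  have hcmono : ∀ a b : Fin k.val, a < b → c a < c b := fun a b h => h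
  -- blocks
  have hV1 : IsUnit (V.submatrix c c).det :=
    upper_det_unit _ (fun a b h => hV _ _ (hcmono _ _ h)) (fun a => hd _)
  have hL1 : IsUnit (L.submatrix c c).det := by
    rw [← Matrix.det_transpose]
    exact upper_det_unit _ (fun a b h => hL _ _ (hcmono _ _ h))
      (fun a => by simp [Matrix.transpose_apply, hLd])
  have h11 : A.submatrix c c = L.submatrix c c * V.submatrix c c := by
    ext a b
    rw [Matrix.mul_apply, Matrix.submatrix_apply, hA, Matrix.mul_apply]
    rw [sum_castLE hk _ fun m hm => by
      rw [hV m (c b) (lt_of_lt_of_le (hclt b) hm), mul_zero]]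
    rfl
  have hrow : (fun a => A i (c a)) = (fun a => L i (c a)) ᵥ* V.submatrix c c := by
    ext b
    rw [hA, Matrix.mul_apply]
    rw [sum_castLE hk _ fun m hm => by
      rw [hV m (c b) (lt_of_lt_of_le (hclt b) hm), mul_zero]]
    rfl
  have hcol : (fun a => A (c a) k) = L.submatrix c c *ᵥ (fun a => V (c a) k) := by
    ext b
    rw [hA, Matrix.mul_apply]
    rw [sum_castLE hk _ fun m hm => by
      rw [hL (c b) m (lt_of_lt_of_le (hclt b) hm), zero_mul]]
    rfl
  have hent : A i k = (fun a => L i (c a)) ⬝ᵥ (fun a => V (c a) k) + L i k * V k k := by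
    rw [hA, Matrix.mul_apply, ← Finset.sum_erase_add _ _ (Finset.mem_univ k)]
    congr 1
    have h0 : ∑ x ∈ Finset.univ.erase k, L i x * V x k
        = ∑ x, if x = k then 0 else L i x * V x k := by
      rw [← Finset.sum_erase (a := k) Finset.univ (by simp)]
      apply Finset.sum_congr rfl
      intro x hx
      rw [if_neg (Finset.ne_of_mem_erase hx)]
    rw [h0, sum_castLE hk]
    · apply Finset.sum_congr rfl
      intro a _
      exact if_neg (hclt a).ne
    · intro m hm
      split_ifs with h
      · rfl
      · rw [hV m k (lt_of_le_of_ne hm (Ne.symm h)), mul_zero]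
  have hsum : ∑ a : Fin k.val, ∑ b : Fin k.val, A i (c a) * (A.submatrix c c)⁻¹ a b * A (c b) k
      = (fun a => A i (c a)) ⬝ᵥ ((A.submatrix c c)⁻¹ *ᵥ (fun b => A (c b) k)) := by
    simp only [dotProduct, Matrix.mulVec, Finset.mul_sum, mul_assoc]
  have hfin : (fun a => A i (c a)) ⬝ᵥ ((A.submatrix c c)⁻¹ *ᵥ (fun b => A (c b) k))
      = (fun a => L i (c a)) ⬝ᵥ (fun a => V (c a) k) := by
    rw [hrow, hcol, h11, Matrix.mul_inv_rev, Matrix.mulVec_mulVec, Matrix.mul_assoc,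
      Matrix.nonsing_inv_mul _ hL1, Matrix.mul_one, ← Matrix.dotProduct_mulVec,
      Matrix.mulVec_mulVec, Matrix.mul_nonsing_inv _ hV1, Matrix.one_mulVec]
  unfold geEntry
  rw [hsum, hfin, hent]
  ring

lemma abs_le_maxAbs {n : ℕ} (L : Matrix (Fin n) (Fin n) ℝ) (i j : Fin n) :
    |L i j| ≤ maxAbs L := by
  unfold maxAbs
  exact (le_ciSup (f := fun j => |L i j|) (Set.finite_range _).bddAbove j).trans
    (le_ciSup (f := fun i => ⨆ j, |L i j|) (Set.finite_range _).bddAbove i)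

/-- shared structure of QR and LU factorizations: if `A` is invertible and PP,
`A = QR` with `Q` orthogonal and `R` upper triangular with positive diagonal, and
`A = LUD` with `L` unipotent lower triangular with `‖L‖_max = 1`, `U` upper triangular with
positive diagonal, and `D` a diagonal sign matrix, then `Q = L(UDR⁻¹)` is the GE (GENP/GEPP)
factorization of `Q` (so `Q` is PP), and `LD = Q(R(DUD)⁻¹)` is the QR factorization of `LD`. -/
theorem qr_lu_shared (n : ℕ) (A Q R L U D : Matrix (Fin n) (Fin n) ℝ)
    (hA : IsUnit A) (hPP : IsPP A)
    (hQR : A = Q * R) (hQ : Qᵀ * Q = 1)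
    (hRu : ∀ i j : Fin n, j < i → R i j = 0) (hRd : ∀ i : Fin n, 0 < R i i)
    (hLUD : A = L * U * D)
    (hLl : ∀ i j : Fin n, i < j → L i j = 0) (hLd : ∀ i : Fin n, L i i = 1)
    (hLmax : maxAbs L = 1)
    (hUu : ∀ i j : Fin n, j < i → U i j = 0) (hUd : ∀ i : Fin n, 0 < U i i)
    (hD : IsSignDiag D) :
    ((∀ i j : Fin n, j < i → (U * D * R⁻¹) i j = 0) ∧
      Q = L * (U * D * R⁻¹) ∧ IsPP Q) ∧
    ((∀ i j : Fin n, j < i → (R * (D * U * D)⁻¹) i j = 0) ∧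
      (∀ i : Fin n, 0 < (R * (D * U * D)⁻¹) i i) ∧
      L * D = Q * (R * (D * U * D)⁻¹)) := by
  have hDu : ∀ i j : Fin n, j < i → D i j = 0 := fun i j h => hD.1 i j h.ne'
  have hDsq : ∀ i, D i i * D i i = 1 := by
    intro i
    rcases hD.2 i with h | h <;> rw [h] <;> norm_num
  have hDne : ∀ i, D i i ≠ 0 := fun i h => by simpa [h] using hDsq i
  have hDD : D * D = 1 := by
    ext i j
    rcases lt_trichotomy i j with h | h | h
    · rw [Matrix.mul_apply, Matrix.one_apply_ne h.ne]
      apply Finset.sum_eq_zero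
      intro m _
      by_cases hm : i = m
      · rw [hD.1 m j (by rw [← hm]; exact h.ne), mul_zero]
      · rw [hD.1 i m hm, zero_mul]
    · subst h
      rw [upper_mul_diag D D hDu hDu, hDsq, Matrix.one_apply_eq]
    · rw [upper_mul D D hDu hDu i j h, Matrix.one_apply_ne h.ne']
  have hRne : ∀ i, R i i ≠ 0 := fun i => (hRd i).ne'
  have hRi := upper_inv R hRu hRne
  have hUD := upper_mul U D hUu hDu
  have hV := upper_mul _ _ hUD hRi
  have hVd : ∀ i, (U * D * R⁻¹) i i ≠ 0 := by
    intro i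
    rw [upper_mul_diag _ _ hUD hRi, upper_mul_diag U D hUu hDu, upper_inv_diag R hRu hRne]
    exact mul_ne_zero (mul_ne_zero (hUd i).ne' (hDne i)) (inv_ne_zero (hRne i))
  have hRdet := upper_det_unit R hRu hRne
  have hQeq : Q = L * (U * D * R⁻¹) := by
    rw [← Matrix.mul_assoc, ← Matrix.mul_assoc, ← hLUD, hQR, Matrix.mul_assoc,
      Matrix.mul_nonsing_inv _ hRdet, Matrix.mul_one]
  have hDU := upper_mul D U hDu hUu
  have hW := upper_mul _ _ hDU hDu
  have hWd : ∀ i, (D * U * D) i i = U i i := by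
    intro i
    rw [upper_mul_diag _ _ hDU hDu, upper_mul_diag D U hDu hUu]
    linear_combination U i i * hDsq i
  have hWne : ∀ i, (D * U * D) i i ≠ 0 := fun i => by rw [hWd]; exact (hUd i).ne'
  have hWi := upper_inv _ hW hWne
  refine ⟨⟨hV, hQeq, ?_⟩, upper_mul _ _ hRu hWi, ?_, ?_⟩
  · intro k i _
    rw [geEntry_of_LU Q L _ hQeq hLl hLd hV hVd, geEntry_of_LU Q L _ hQeq hLl hLd hV hVd, hLd,
      one_mul, abs_mul]
    exact mul_le_of_le_one_left (abs_nonneg _) (hLmax ▸ abs_le_maxAbs L i k)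
  · intro i
    rw [upper_mul_diag _ _ hRu hWi, upper_inv_diag _ hW hWne, hWd]
    exact mul_pos (hRd i) (inv_pos.mpr (hUd i))
  · have hA2 : Q * R = L * D * (D * U * D) := by
      rw [← hQR, hLUD]
      simp only [← Matrix.mul_assoc]
      rw [Matrix.mul_assoc L D D, hDD, Matrix.mul_one]
    rw [← Matrix.mul_assoc, hA2, Matrix.mul_assoc (L * D),
      Matrix.mul_nonsing_inv _ (upper_det_unit _ hW hWne), Matrix.mul_one]
end

section
/- For every n ≥ 3, the matrix Q̂ satisfies Q̂ᵀ Q̂ = D̂; that is, the columns of Q̂ are pairwise orthogonal and the squared Euclidean norm of column j of Q̂ equals D̂_{jj}, where D̂_{11} = n, D̂_{n−1,n−1} = 2, D̂_{nn} = 2α_{n−1}, and D̂_{jj} = (n−j)²(α_j − 1)²·(2α_j − 1)/(2α_j − 2) + (n−j)(α_j² + α_j − 1) + 2α_{j−1} for 2 ≤ j ≤ n−2. -/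
open Matrix Filter

/-- The uniform column formula, valid for every column up to scaling column `n-2`. -/
noncomputable def colG (n i j : ℕ) : ℝ :=
  if i < j then -((n : ℝ) - j - 2) * 2 ^ (j - i - 1)
  else if i = j then ((n : ℝ) - j - 1) * (alpha (j + 1) - 1) + 1
  else -alpha (j + 1)

theorem alpha_succ_eq (j : ℕ) : alpha (j + 1) = (2 * 4 ^ j + 1) / 3 := by
  simp only [alpha, Nat.add_sub_cancel]; ring

theorem sum_two_pow_rev (d : ℕ) : ∑ i ∈ Finset.range d, (2 : ℝ) ^ (d - i - 1) = 2 ^ d - 1 := by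
  induction d with
  | zero => simp
  | succ d ih =>
    rw [Finset.sum_range_succ']
    have : ∀ i ∈ Finset.range d, (2 : ℝ) ^ (d + 1 - (i + 1) - 1) = 2 ^ (d - i - 1) := by
      intro i _; congr 1; omega
    rw [Finset.sum_congr rfl this, ih]
    simp [pow_succ]; ring

theorem sum_four_pow_rev (d : ℕ) :
    ∑ i ∈ Finset.range d, (4 : ℝ) ^ (d - i - 1) = (4 ^ d - 1) / 3 := by
  induction d with
  | zero => simp
  | succ d ih =>
    rw [Finset.sum_range_succ']
    have : ∀ i ∈ Finset.range d, (4 : ℝ) ^ (d + 1 - (i + 1) - 1) = 4 ^ (d - i - 1) := by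
      intro i _; congr 1; omega
    rw [Finset.sum_congr rfl this, ih]
    simp [pow_succ]; ring

theorem colG_orth (n j k : ℕ) (hjk : j < k) (hk : k < n) :
    ∑ i ∈ Finset.range n, colG n i j * colG n i k = 0 := by
  obtain ⟨d, rfl⟩ : ∃ d, k = j + 1 + d := ⟨k - (j + 1), by omega⟩
  obtain ⟨m, rfl⟩ : ∃ m, n = j + 1 + d + 1 + m := ⟨n - (j + 1 + d + 1), by omega⟩
  rw [Finset.sum_range_add, Finset.sum_range_succ, Finset.sum_range_add, Finset.sum_range_succ]
  have h1 : ∀ i ∈ Finset.range j,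
      colG (j + 1 + d + 1 + m) i j * colG (j + 1 + d + 1 + m) i (j + 1 + d)
        = ((d : ℝ) + m) * (m - 1) * 2 ^ (d + 1) * 4 ^ (j - i - 1) := by
    intro i hi
    rw [Finset.mem_range] at hi
    have e : j + 1 + d - i - 1 = (j - i - 1) + (d + 1) := by omega
    have e4 : (4 : ℝ) ^ (j - i - 1) = 2 ^ (j - i - 1) * 2 ^ (j - i - 1) := by
      rw [← mul_pow]; norm_num
    simp only [colG, if_pos hi, if_pos (show i < j + 1 + d by omega), e, e4, pow_add]
    push_cast; ring
  have h2 : ∀ i ∈ Finset.range d,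
      colG (j + 1 + d + 1 + m) (j + 1 + i) j * colG (j + 1 + d + 1 + m) (j + 1 + i) (j + 1 + d)
        = alpha (j + 1) * (m - 1) * 2 ^ (d - i - 1) := by
    intro i hi
    rw [Finset.mem_range] at hi
    have e : j + 1 + d - (j + 1 + i) - 1 = d - i - 1 := by omega
    simp only [colG, if_neg (show ¬ j + 1 + i < j by omega),
      if_neg (show ¬ j + 1 + i = j by omega), if_pos (show j + 1 + i < j + 1 + d by omega), e]
    push_cast; ring
  have h3 : ∀ i ∈ Finset.range m,
      colG (j + 1 + d + 1 + m) (j + 1 + d + 1 + i) j *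
        colG (j + 1 + d + 1 + m) (j + 1 + d + 1 + i) (j + 1 + d)
        = alpha (j + 1) * alpha (j + 1 + d + 1) := by
    intro i hi
    simp only [colG, if_neg (show ¬ j + 1 + d + 1 + i < j by omega),
      if_neg (show ¬ j + 1 + d + 1 + i = j by omega),
      if_neg (show ¬ j + 1 + d + 1 + i < j + 1 + d by omega),
      if_neg (show ¬ j + 1 + d + 1 + i = j + 1 + d by omega)]
    ring
  rw [Finset.sum_congr rfl h1, Finset.sum_congr rfl h2, Finset.sum_congr rfl h3,
    ← Finset.mul_sum, ← Finset.mul_sum, sum_two_pow_rev, sum_four_pow_rev]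
  have e : j + 1 + d - j - 1 = d := by omega
  have e4 : (4 : ℝ) ^ d = 2 ^ d * 2 ^ d := by
    rw [← mul_pow]; norm_num
  simp only [colG, lt_irrefl, if_false, if_true, if_pos (show j < j + 1 + d by omega),
    if_neg (show ¬ j + 1 + d < j by omega), if_neg (show ¬ j + 1 + d = j by omega), e,
    Finset.sum_const, Finset.card_range, nsmul_eq_mul, alpha_succ_eq, pow_add, e4]
  push_cast; ring

theorem colG_norm (n j : ℕ) (hj : j < n) :
    ∑ i ∈ Finset.range n, colG n i j * colG n i j =
      ((n : ℝ) - j - 2) ^ 2 * ((4 ^ j - 1) / 3)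
      + (((n : ℝ) - j - 1) * (alpha (j + 1) - 1) + 1) ^ 2
      + ((n : ℝ) - j - 1) * alpha (j + 1) ^ 2 := by
  obtain ⟨m, rfl⟩ : ∃ m, n = j + 1 + m := ⟨n - (j + 1), by omega⟩
  rw [Finset.sum_range_add, Finset.sum_range_succ]
  have h1 : ∀ i ∈ Finset.range j, colG (j + 1 + m) i j * colG (j + 1 + m) i j
        = ((m : ℝ) - 1) ^ 2 * 4 ^ (j - i - 1) := by
    intro i hi
    rw [Finset.mem_range] at hi
    have e4 : (4 : ℝ) ^ (j - i - 1) = 2 ^ (j - i - 1) * 2 ^ (j - i - 1) := by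
      rw [← mul_pow]; norm_num
    simp only [colG, if_pos hi, e4]
    push_cast; ring
  have h3 : ∀ i ∈ Finset.range m,
      colG (j + 1 + m) (j + 1 + i) j * colG (j + 1 + m) (j + 1 + i) j = alpha (j + 1) ^ 2 := by
    intro i hi
    simp only [colG, if_neg (show ¬ j + 1 + i < j by omega),
      if_neg (show ¬ j + 1 + i = j by omega)]
    ring
  rw [Finset.sum_congr rfl h1, Finset.sum_congr rfl h3, ← Finset.mul_sum, sum_four_pow_rev]
  simp only [colG, lt_irrefl, if_false, if_true, Finset.sum_const, Finset.card_range, nsmul_eq_mul]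
  push_cast; ring

/-- Scaling of the columns. -/
noncomputable def colC (n j : ℕ) : ℝ := if j = n - 2 then (alpha (j + 1))⁻¹ else 1

theorem alpha_succ_pos (j : ℕ) : 0 < alpha (j + 1) := by
  rw [alpha_succ_eq]; positivity

theorem Qhat_eq (n : ℕ) (hn : 3 ≤ n) (i j : Fin n) :
    Qhat n i j = colC n j * colG n i j := by
  obtain ⟨i, hi⟩ := i
  obtain ⟨j, hj⟩ := j
  simp only [Qhat, colC]
  obtain ⟨m, rfl⟩ : ∃ m, n = m + 2 := ⟨n - 2, by omega⟩
  simp only [Nat.add_sub_cancel, show m + 2 - 1 = m + 1 by omega]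
  by_cases h1 : j = m + 1
  · subst h1
    rw [if_pos rfl, if_neg (show ¬ m + 1 = m by omega), one_mul]
    by_cases h : i = m + 1
    · subst h
      simp only [colG, lt_irrefl, if_false, if_true]
      push_cast; ring
    · simp only [colG, if_neg h, if_pos (show i < m + 1 by omega)]
      rw [show m + 1 - i - 1 = m - i by omega]
      push_cast; ring
  · rw [if_neg h1]
    by_cases h2 : j = m
    · subst h2
      have := (alpha_succ_pos j).ne'
      rw [if_pos rfl, if_pos rfl]
      rcases lt_trichotomy i j with h | h | h
      · simp only [colG, if_pos h, if_neg (show ¬ i = j by omega),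
          if_neg (show ¬ i = j + 1 by omega)]
        push_cast; ring
      · subst h
        simp only [colG, lt_irrefl, if_false, if_true]
        push_cast; field_simp; ring
      · simp only [colG, if_neg (show ¬ i = j by omega), if_neg (show ¬ i < j by omega),
          if_pos (show i = j + 1 by omega)]
        field_simp
    · rw [if_neg h2, if_neg h2, one_mul, colG]

/-- for `n ≥ 3`, `Q̂ᵀ Q̂ = D̂`: the columns of `Q̂` are pairwise orthogonal
and the squared norm of column `j` equals `D̂_{jj}`. -/
theorem Qhat_columns_orthogonal (n : ℕ) (hn : 3 ≤ n) :
    (Qhat n)ᵀ * Qhat n = Dhat n := by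
  have key : ∀ j k : Fin n, ((Qhat n)ᵀ * Qhat n) j k =
      colC n j * colC n k * ∑ i ∈ Finset.range n, colG n i j * colG n i k := by
    intro j k
    rw [Matrix.mul_apply, Finset.mul_sum,
      ← Fin.sum_univ_eq_sum_range (fun i => colC n j * colC n k * (colG n i j * colG n i k)) n]
    refine Finset.sum_congr rfl fun i _ => ?_
    rw [Matrix.transpose_apply, Qhat_eq n hn, Qhat_eq n hn]; ring
  ext j k
  rw [key]
  rcases lt_trichotomy j k with h | h | h
  · rw [colG_orth n j k h k.2, mul_zero, Dhat, Matrix.diagonal_apply_ne _ h.ne]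
  · subst h
    rw [colG_norm n j j.2, Dhat, Matrix.diagonal_apply_eq]
    obtain ⟨j, hj⟩ := j
    simp only [colC]
    rcases j with _ | j
    · rw [if_neg (by omega), if_pos rfl]
      simp [alpha]
    · have hp : (0 : ℝ) < 4 ^ j := by positivity
      have h1 : (1 : ℝ) ≤ 4 ^ j := one_le_pow₀ (by norm_num)
      rw [if_neg (by omega : ¬ j + 1 = 0)]
      by_cases h2 : j + 1 = n - 2
      · obtain rfl : n = j + 3 := by omega
        rw [if_pos h2, if_pos h2]
        have := (alpha_succ_pos (j + 1)).ne'
        push_cast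
        field_simp
        rw [alpha_succ_eq]
        ring
      · rw [if_neg h2, if_neg h2]
        by_cases h3 : j + 1 = n - 1
        · obtain rfl : n = j + 2 := by omega
          rw [if_pos h3, show j + 2 - 1 = j + 1 by omega, alpha_succ_eq, alpha_succ_eq]
          push_cast
          ring
        · rw [if_neg h3, alpha_succ_eq, alpha_succ_eq]
          have hd : (2 * ((2 * 4 ^ (j + 1) + 1) / 3) - 2 : ℝ) ≠ 0 := by
            rw [pow_succ]; apply ne_of_gt; linarith
          rw [eq_comm, ← sub_eq_zero]
          field_simp
          ring
  · simp_rw [mul_comm (colG n _ j)]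
    rw [colG_orth n k j h j.2, mul_zero, Dhat, Matrix.diagonal_apply_ne _ h.ne']
end

section
/- For every n ≥ 3, the final Gaussian-elimination pivot of Q̂ equals 2α_{n−1}; that is, det(Q̂) / det(Q̂_{1:n−1,1:n−1}) = 2α_{n−1}, equivalently the (n,n) Gaussian-elimination intermediate entry Q̂^{(n)}_{nn} = 2α_{n−1}. -/
open Matrix Filter

theorem qh_general {N : ℕ} (A : Matrix (Fin (N+1)) (Fin (N+1)) ℝ) (c : ℝ)
    (v : Fin (N+1) → ℝ) (hv : v (Fin.last N) = 1) (hA : A.det ≠ 0)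
    (h : ∀ j, ∑ i, v i * A i j = if j = Fin.last N then c else 0) :
    A.det / (A.submatrix Fin.castSucc Fin.castSucc).det = c ∧
    A (Fin.last N) (Fin.last N) - ∑ a : Fin N, ∑ b : Fin N,
      A (Fin.last N) a.castSucc * (A.submatrix Fin.castSucc Fin.castSucc)⁻¹ a b *
      A b.castSucc (Fin.last N) = c := by
  have hvA : v ᵥ* A = Pi.single (Fin.last N) c := by
    ext j
    rw [Matrix.vecMul, dotProduct, h j, Pi.single_apply]
  have h1 : A.det = c * (A.submatrix Fin.castSucc Fin.castSucc).det := by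
    have h2 : (v ᵥ* A) ᵥ* A.adjugate = A.det • v := by
      rw [Matrix.vecMul_vecMul, Matrix.mul_adjugate, Matrix.vecMul_smul, Matrix.vecMul_one]
    have h3 := congrFun h2 (Fin.last N)
    rw [hvA] at h3
    simp only [Matrix.single_vecMul, Pi.smul_apply, hv, Matrix.row, smul_eq_mul, mul_one] at h3
    rw [← h3, Matrix.adjugate_fin_succ_eq_det_submatrix]
    simp only [Fin.succAbove_last]
    rw [← two_mul, pow_mul]
    simp
  have hD : (A.submatrix Fin.castSucc Fin.castSucc).det ≠ 0 := by
    intro h0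
    rw [h0, mul_zero] at h1
    exact hA h1
  refine ⟨by rw [h1, mul_div_assoc, div_self hD, mul_one], ?_⟩
  set B := A.submatrix Fin.castSucc Fin.castSucc with hB
  set u : Fin N → ℝ := fun i => v i.castSucc with hu
  have hr : (fun a : Fin N => A (Fin.last N) a.castSucc) = -(u ᵥ* B) := by
    ext a
    have := h a.castSucc
    rw [Fin.sum_univ_castSucc, hv, if_neg (Fin.castSucc_lt_last a).ne] at this
    simp only [Pi.neg_apply, Matrix.vecMul, dotProduct, hB, hu, Matrix.submatrix_apply]
    linarith
  have hs : ∑ a : Fin N, ∑ b : Fin N,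
      A (Fin.last N) a.castSucc * B⁻¹ a b * A b.castSucc (Fin.last N)
      = ((fun a : Fin N => A (Fin.last N) a.castSucc) ᵥ* B⁻¹) ⬝ᵥ
        (fun b : Fin N => A b.castSucc (Fin.last N)) := by
    simp only [dotProduct, Matrix.vecMul, Finset.sum_mul]
    rw [Finset.sum_comm]
  rw [hs, hr, Matrix.neg_vecMul, Matrix.vecMul_vecMul, Matrix.mul_nonsing_inv _ (Ne.isUnit hD),
    Matrix.vecMul_one, neg_dotProduct]
  have := h (Fin.last N)
  rw [Fin.sum_univ_castSucc, hv, if_pos rfl] at this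
  simp only [dotProduct, hu]
  linarith

/-- Natural-number indexed version of the entries. -/
noncomputable def qhE (n i j : ℕ) : ℝ :=
    if j = n - 1 then
      if i = n - 1 then 1 else 2 ^ (n - 2 - i)
    else if j = n - 2 then
      if i = n - 2 then 1 else if i = n - 1 then -1 else 0
    else if i < j then
      -((n : ℝ) - j - 2) * 2 ^ (j - i - 1)
    else if i = j then
      ((n : ℝ) - j - 1) * (alpha (j + 1) - 1) + 1
    else -alpha (j + 1)

theorem qh_geom2 (p : ℕ) : ∑ x ∈ Finset.range p, (2:ℝ) ^ (p - 1 - x) = 2 ^ p - 1 := by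
  rw [Finset.sum_range_reflect (fun x => (2:ℝ) ^ x) p, geom_sum_eq (by norm_num)]
  norm_num

theorem qh_geom4 (p : ℕ) : ∑ x ∈ Finset.range p, ((2:ℝ) ^ (p - 1 - x)) * 2 ^ (p - 1 - x)
    = (4 ^ p - 1) / 3 := by
  rw [Finset.sum_range_reflect (fun x => (2:ℝ) ^ x * 2 ^ x) p]
  simp only [← mul_pow]
  rw [geom_sum_eq (by norm_num)]
  norm_num

theorem qh_sum_low (j p : ℕ) :
    ∑ i ∈ Finset.range j, (2:ℝ) ^ (j + p - i) * 2 ^ (j - i - 1) = 2 ^ p * (2 / 3 * (4 ^ j - 1)) := by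
  induction j with
  | zero => simp
  | succ j ih =>
    rw [Finset.sum_range_succ']
    have : ∀ i ∈ Finset.range j, (2:ℝ) ^ (j + 1 + p - (i + 1)) * 2 ^ (j + 1 - (i + 1) - 1)
        = 2 ^ (j + p - i) * 2 ^ (j - i - 1) := by
      intro i _
      congr 2 <;> omega
    rw [Finset.sum_congr rfl this, ih]
    simp only [Nat.sub_zero, Nat.add_sub_cancel]
    have h4 : (4:ℝ) ^ j = 2 ^ (j * 2) := by rw [mul_comm, pow_mul]; norm_num
    rw [pow_succ (4:ℝ) j, h4]
    ring

/-- weights: last column -/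
theorem qh_orth (N j : ℕ) (hN : 2 ≤ N) (hj : j < N + 1) :
    ∑ i ∈ Finset.range (N + 1), qhE (N + 1) i N * qhE (N + 1) i j
      = if j = N then 2 * alpha N else 0 := by
  have hlast : ∀ i, qhE (N+1) i N = if i = N then 1 else 2 ^ (N - 1 - i) := by
    intro i
    simp [qhE]
  simp only [hlast]
  by_cases h1 : j = N
  · subst h1
    simp only [hlast, if_true]
    rw [Finset.sum_range_succ]
    have : ∀ i ∈ Finset.range j, ((if i = j then (1:ℝ) else 2 ^ (j - 1 - i)) *
        (if i = j then (1:ℝ) else 2 ^ (j - 1 - i))) = 2 ^ (j - 1 - i) * 2 ^ (j - 1 - i) := by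
      intro i hi
      have := Finset.mem_range.1 hi
      rw [if_neg (by omega)]
    rw [Finset.sum_congr rfl this, qh_geom4]
    obtain ⟨k, rfl⟩ : ∃ k, j = k + 1 := ⟨j - 1, by omega⟩
    simp [alpha, pow_succ]
    ring
  rw [if_neg h1]
  by_cases h2 : j = N - 1
  · obtain ⟨k, rfl⟩ : ∃ k, N = k + 1 := ⟨N - 1, by omega⟩
    simp only [Nat.add_sub_cancel] at h2
    subst h2
    rw [Finset.sum_range_succ, Finset.sum_range_succ, Finset.sum_eq_zero]
    · simp [qhE]
    · intro i hi
      have := Finset.mem_range.1 hi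
      have a1 : i ≠ j := by omega
      have a2 : i ≠ j + 1 := by omega
      simp [qhE, a1, a2]
  · obtain ⟨p, rfl⟩ : ∃ p, N = j + 1 + p := ⟨N - j - 1, by omega⟩
    rw [show j + 1 + p + 1 = (j + 1) + (p + 1) by ring, Finset.sum_range_add,
      Finset.sum_range_succ, Finset.sum_range_succ]
    have e1 : ∀ i ∈ Finset.range j, ((if i = j + 1 + p then (1:ℝ) else 2 ^ (j + 1 + p - 1 - i)) *
        qhE (j + 1 + (p + 1)) i j) = -(p:ℝ) * (2 ^ (j + p - i) * 2 ^ (j - i - 1)) := by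
      intro i hi
      have := Finset.mem_range.1 hi
      rw [if_neg (by omega), qhE, if_neg (by omega), if_neg (by omega), if_pos (by omega),
        show j + 1 + p - 1 - i = j + p - i by omega]
      push_cast
      ring
    have e2 : ∀ x ∈ Finset.range p,
        ((if j + 1 + x = j + 1 + p then (1:ℝ) else 2 ^ (j + 1 + p - 1 - (j + 1 + x))) *
        qhE (j + 1 + (p + 1)) (j + 1 + x) j) = - alpha (j + 1) * 2 ^ (p - 1 - x) := by
      intro i hi
      have := Finset.mem_range.1 hi
      rw [if_neg (by omega), qhE, if_neg (by omega), if_neg (by omega), if_neg (by omega),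
        if_neg (by omega), show j + 1 + p - 1 - (j + 1 + i) = p - 1 - i by omega]
      ring
    rw [Finset.sum_congr rfl e1, Finset.sum_congr rfl e2, ← Finset.mul_sum, ← Finset.mul_sum,
      qh_sum_low, qh_geom2, if_neg (by omega), if_pos rfl]
    have e3 : qhE (j + 1 + (p + 1)) j j = ((p:ℝ) + 1) * (alpha (j + 1) - 1) + 1 := by
      rw [qhE, if_neg (by omega), if_neg (by omega), if_neg (by omega), if_pos rfl]
      push_cast
      ring
    have e4 : qhE (j + 1 + (p + 1)) (j + 1 + p) j = - alpha (j + 1) := by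
      rw [qhE, if_neg (by omega), if_neg (by omega), if_neg (by omega), if_neg (by omega)]
    rw [e3, e4, show j + 1 + p - 1 - j = p by omega]
    simp only [alpha, Nat.add_sub_cancel]
    ring

/-- suffix sums -/
theorem qh_suffix (N j : ℕ) (hN : 2 ≤ N) (hj : j < N + 1) (d : ℕ) (hd : d < j) :
    qhE (N + 1) (j - 1 - d) j = ∑ i ∈ Finset.Ico (j - 1 - d + 1) (N + 1), qhE (N + 1) i j := by
  induction d with
  | zero =>
    rw [show j - 1 - 0 + 1 = j by omega]
    by_cases h1 : j = N
    · subst h1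
      rw [Finset.sum_Ico_succ_top (by omega)]
      have a1 : j - 1 ≠ j := by omega
      simp [qhE, a1]
    by_cases h2 : j = N - 1
    · obtain ⟨k, rfl⟩ : ∃ k, N = k + 1 := ⟨N - 1, by omega⟩
      simp only [Nat.add_sub_cancel] at h2
      subst h2
      rw [Finset.sum_Ico_succ_top (by omega), Finset.sum_Ico_succ_top (by omega)]
      have a1 : j - 1 ≠ j := by omega
      have a2 : j - 1 ≠ j + 1 := by omega
      simp [qhE, a1, a2]
    · obtain ⟨p, rfl⟩ : ∃ p, N = j + 1 + p := ⟨N - j - 1, by omega⟩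
      rw [Finset.sum_eq_sum_Ico_succ_bot (by omega)]
      have : ∀ i ∈ Finset.Ico (j + 1) (j + 1 + p + 1), qhE (j + 1 + p + 1) i j = - alpha (j+1) := by
        intro i hi
        have := Finset.mem_Ico.1 hi
        rw [qhE, if_neg (by omega), if_neg (by omega), if_neg (by omega), if_neg (by omega)]
      rw [Finset.sum_congr rfl this, Finset.sum_const, Nat.card_Ico,
        show j + 1 + p + 1 - (j + 1) = p + 1 by omega]
      rw [qhE, if_neg (by omega), if_neg (by omega), if_pos (by omega),
        qhE, if_neg (by omega), if_neg (by omega), if_neg (by omega), if_pos rfl,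
        show j - (j - 1 - 0) - 1 = 0 by omega]
      simp only [nsmul_eq_mul]
      push_cast
      ring
  | succ d ih =>
    rw [show j - 1 - (d + 1) + 1 = j - 1 - d by omega, Finset.sum_eq_sum_Ico_succ_bot (by omega),
      ← ih (by omega)]
    by_cases h1 : j = N
    · subst h1
      simp only [qhE]
      rw [if_pos (by omega), if_neg (by omega), if_pos (by omega), if_neg (by omega),
        show j + 1 - 2 - (j - 1 - (d + 1)) = (j + 1 - 2 - (j - 1 - d)) + 1 by omega]
      ring
    by_cases h2 : j = N - 1
    · simp only [qhE]
      rw [if_neg (by omega), if_pos (by omega), if_neg (by omega), if_neg (by omega),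
        if_neg (by omega), if_pos (by omega), if_neg (by omega), if_neg (by omega)]
      ring
    · simp only [qhE]
      rw [if_neg (by omega), if_neg (by omega), if_pos (by omega),
        if_neg (by omega), if_neg (by omega), if_pos (by omega),
        show j - (j - 1 - (d + 1)) - 1 = (j - (j - 1 - d) - 1) + 1 by omega]
      ring

theorem qh_alpha_ge (j : ℕ) : 1 ≤ alpha j := by
  have : (1:ℝ) ≤ 4 ^ (j - 1) := one_le_pow₀ (by norm_num)
  unfold alpha
  linarith

theorem qh_diag (N j : ℕ) (hN : 2 ≤ N) (hj : j < N + 1) :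
    qhE (N + 1) j j - ∑ i ∈ Finset.Ico (j + 1) (N + 1), qhE (N + 1) i j ≠ 0 := by
  by_cases h1 : j = N
  · subst h1
    simp [qhE]
  by_cases h2 : j = N - 1
  · obtain ⟨k, rfl⟩ : ∃ k, N = k + 1 := ⟨N - 1, by omega⟩
    simp only [Nat.add_sub_cancel] at h2
    subst h2
    rw [Finset.sum_Ico_succ_top (by omega)]
    simp [qhE]
  · obtain ⟨p, rfl⟩ : ∃ p, N = j + 1 + p := ⟨N - j - 1, by omega⟩
    have : ∀ i ∈ Finset.Ico (j + 1) (j + 1 + p + 1), qhE (j + 1 + p + 1) i j = - alpha (j+1) := by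
      intro i hi
      have := Finset.mem_Ico.1 hi
      rw [qhE, if_neg (by omega), if_neg (by omega), if_neg (by omega), if_neg (by omega)]
    rw [Finset.sum_congr rfl this, Finset.sum_const, Nat.card_Ico,
      show j + 1 + p + 1 - (j + 1) = p + 1 by omega]
    rw [qhE, if_neg (by omega), if_neg (by omega), if_neg (by omega), if_pos rfl]
    simp only [nsmul_eq_mul]
    push_cast
    have ha := qh_alpha_ge (j + 1)
    have hp : (0:ℝ) ≤ p := Nat.cast_nonneg p
    have := mul_nonneg hp (sub_nonneg.2 ha)
    apply ne_of_gt
    nlinarith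

theorem qh_det (N : ℕ) (hN : 2 ≤ N) : (Qhat (N + 1)).det ≠ 0 := by
  have key : ∀ i j : Fin (N + 1), ((Lmat (N + 1))ᵀ * Qhat (N + 1)) i j =
      qhE (N + 1) i j - ∑ k ∈ Finset.Ico ((i : ℕ) + 1) (N + 1), qhE (N + 1) k j := by
    intro i j
    rw [Matrix.mul_apply]
    have : ∀ k : Fin (N + 1), (Lmat (N + 1))ᵀ i k * Qhat (N + 1) k j =
        (fun k : ℕ => (if k = i then qhE (N + 1) k j else 0) -
          (if (i : ℕ) + 1 ≤ k then qhE (N + 1) k j else 0)) k := by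
      intro k
      have hq : Qhat (N + 1) k j = qhE (N + 1) k j := rfl
      rw [hq]
      simp only [Matrix.transpose_apply, Lmat, Fin.ext_iff, Fin.lt_def]
      split_ifs <;> first | omega | simp
    rw [Finset.sum_congr rfl (fun k _ => this k), Fin.sum_univ_eq_sum_range (fun k : ℕ => (if k = i then qhE (N + 1) k j else 0) -
          (if (i : ℕ) + 1 ≤ k then qhE (N + 1) k j else 0)), Finset.sum_sub_distrib,
      Finset.sum_ite_eq' , if_pos (Finset.mem_range.2 i.2), ← Finset.sum_filter]
    congr 2
    ext k
    simp only [Finset.mem_filter, Finset.mem_range, Finset.mem_Ico]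
    tauto
  have hd : ((Lmat (N + 1))ᵀ * Qhat (N + 1)).det ≠ 0 := by
    rw [Matrix.det_of_lowerTriangular]
    · rw [Finset.prod_ne_zero_iff]
      intro j _
      rw [key]
      exact qh_diag N j hN j.2
    · intro i j hij
      have hij : (i : ℕ) < j := hij
      rw [key, sub_eq_zero]
      have := qh_suffix N j hN j.2 (j - 1 - i) (by omega)
      rwa [show (j : ℕ) - 1 - (j - 1 - i) = i by omega] at this
  intro h
  rw [Matrix.det_mul, h, mul_zero] at hd
  exact hd rfl

theorem Qhat_final_pivot (n : ℕ) (hn : 3 ≤ n) :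
    (Qhat n).det /
      ((Qhat n).submatrix (Fin.castLE (by omega : n - 1 ≤ n))
        (Fin.castLE (by omega : n - 1 ≤ n))).det = 2 * alpha (n - 1) ∧
    geEntry (Qhat n) ⟨n - 1, by omega⟩ ⟨n - 1, by omega⟩ ⟨n - 1, by omega⟩ =
      2 * alpha (n - 1) := by
  obtain ⟨N, rfl⟩ : ∃ N, n = N + 1 := ⟨n - 1, by omega⟩
  exact qh_general (Qhat (N + 1)) (2 * alpha N) (fun i => qhE (N + 1) i N)
    (by simp [qhE]) (qh_det N (by omega)) (by
      intro j
      have := qh_orth N j (by omega) j.2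
      rw [← Fin.sum_univ_eq_sum_range (fun i => qhE (N + 1) i N * qhE (N + 1) i j)] at this
      simp only [Fin.ext_iff, Fin.val_last]
      exact this)
end
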